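/- arXiv:2110.04213 — 3 statements merged into one kernel-verified Lean document; each statement's English description precedes it below -/
import Mathlib

section
/- Endow the torus ℝ²/ℤ² with the flat Riemannian metric coming from the standard Euclidean metric of ℝ². For every ε > 0, there exists a finite set of proper closed 1-dimensional subgroups L₁, …, L_N of ℝ²/ℤ² such that every subgroup H of ℝ²/ℤ² which is not ε-dense is contained in one of the L_j. -/
/-- The Euclidean distance on the torus `ℝ²/ℤ²`, induced by the standard Euclidean
metric of `ℝ²` (each factor `AddCircle 1` carries its quotient metric). -/
noncomputable def torusDist
    (x y : AddCircle (1 : ℝ) × AddCircle (1 : ℝ)) : ℝ :=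
  Real.sqrt (dist x.1 y.1 ^ 2 + dist x.2 y.2 ^ 2)

open MeasureTheory UnitAddTorus

theorem integral_eq_zero_of_map_add_eq_mul {G : Type*} [AddGroup G] [MeasurableSpace G]
    [MeasurableAdd G] (μ : Measure G) [μ.IsAddLeftInvariant] {f : G → ℂ}
    (hf : ∀ g h, f (g + h) = f g * f h) {g : G} (hg : f g ≠ 1) : ∫ x, f x ∂μ = 0 := by
  have h := integral_add_left_eq_self (μ := μ) f g
  simp only [hf, integral_const_mul] at h
  have h' : (f g - 1) * ∫ x, f x ∂μ = 0 := by rw [sub_mul, h, one_mul, sub_self]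
  exact (mul_eq_zero.mp h').resolve_left (sub_ne_zero.mpr hg)

theorem UnitAddTorus.mFourier_eq_toCircle {d : Type*} [Fintype d] (n : d → ℤ)
    (x : UnitAddTorus d) :
    mFourier n x = (AddCircle.toCircle (∑ i, n i • x i) : ℂ) := by
  have h (s : Finset d) : ∏ i ∈ s, fourier (n i) (x i) =
      (AddCircle.toCircle (∑ i ∈ s, n i • x i) : ℂ) := by
    classical
    induction s using Finset.induction_on with
    | empty => simp
    | insert i s hi ih =>
      rw [Finset.prod_insert hi, Finset.sum_insert hi, AddCircle.toCircle_add, ih, Circle.coe_mul,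
        fourier_apply]
  exact h Finset.univ

theorem UnitAddTorus.mFourier_apply_add {d : Type*} [Fintype d] (n : d → ℤ)
    (x y : UnitAddTorus d) : mFourier n (x + y) = mFourier n x * mFourier n y := by
  simp only [mFourier_eq_toCircle, Pi.add_apply, smul_add, Finset.sum_add_distrib,
    AddCircle.toCircle_add, Circle.coe_mul]

theorem UnitAddTorus.mFourier_apply_eq_one_iff {d : Type*} [Fintype d] {n : d → ℤ}
    {x : UnitAddTorus d} : mFourier n x = 1 ↔ ∑ i, n i • x i = 0 := by
  rw [mFourier_eq_toCircle, Circle.coe_eq_one, ← AddCircle.toCircle_zero (T := (1 : ℝ))]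
  exact (AddCircle.injective_toCircle one_ne_zero).eq_iff

theorem UnitAddTorus.exists_mFourier_apply_ne_one {d : Type*} [Fintype d] {n : d → ℤ}
    (hn : n ≠ 0) : ∃ x, mFourier n x ≠ 1 := by
  classical
  obtain ⟨i, hi⟩ := Function.ne_iff.mp hn
  have hi' : (n i : ℝ) ≠ 0 := by exact_mod_cast hi
  refine ⟨Pi.single i ((1 / (2 * n i) : ℝ) : AddCircle (1 : ℝ)), ?_⟩
  rw [Ne, mFourier_apply_eq_one_iff, Finset.sum_eq_single i
    (fun j _ hj => by rw [Pi.single_eq_of_ne hj, smul_zero]) (by simp), Pi.single_eq_same,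
    ← AddCircle.coe_zsmul, AddCircle.coe_eq_zero_iff]
  rintro ⟨m, hm⟩
  rw [zsmul_eq_mul, zsmul_eq_mul, mul_one] at hm
  field_simp at hm
  have : m * 2 = 1 := by exact_mod_cast hm
  omega

/-- The average of a trigonometric polynomial over a coset of a subgroup on which none of its
nonconstant monomials is trivial is its constant coefficient. -/
theorem UnitAddTorus.integral_sum_mFourier_coset {d G : Type*} [Fintype d] [AddGroup G]
    [TopologicalSpace G] [CompactSpace G] [MeasurableSpace G] [BorelSpace G] [ContinuousAdd G]
    (μ : Measure G) [IsProbabilityMeasure μ] [μ.IsAddLeftInvariant]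
    (φ : G →+ UnitAddTorus d) (hφ : Continuous φ) (c : (d → ℤ) →₀ ℂ)
    (hc : ∀ n ∈ c.support, n ≠ 0 → ∃ g, mFourier n (φ g) ≠ 1) (z : UnitAddTorus d) :
    ∫ g, (c.sum fun n a => a • mFourier n) (z + φ g) ∂μ = c 0 := by
  have hint (n : d → ℤ) : Integrable (fun g => c n * mFourier n (z + φ g)) μ :=
    Continuous.integrable_of_hasCompactSupport (by fun_prop) (HasCompactSupport.of_compactSpace _)
  simp only [Finsupp.sum, ContinuousMap.coe_sum, Finset.sum_apply, ContinuousMap.coe_smul,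
    Pi.smul_apply, smul_eq_mul]
  rw [integral_finsetSum _ fun n _ => hint n, Finset.sum_eq_single 0]
  · simp [mFourier_zero]
  · intro n hn hn0
    obtain ⟨g, hg⟩ := hc n hn hn0
    simp only [mFourier_apply_add, integral_const_mul]
    rw [integral_eq_zero_of_map_add_eq_mul μ (f := fun g => mFourier n (φ g))
      (fun g h => by rw [map_add, mFourier_apply_add]) hg, mul_zero, mul_zero]
  · intro h
    simp [Finsupp.notMem_support_iff.mp h]

/-- For a fixed nonempty open set `U`, there is a finite set of nontrivial characters such that
every subgroup with a coset missing `U` is annihilated by one of them. -/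
theorem UnitAddTorus.exists_finset_mFourier_eq_one_of_disjoint {d : Type*} [Fintype d]
    {U : Set (UnitAddTorus d)} (hU : IsOpen U) (hne : U.Nonempty) :
    ∃ F : Finset (d → ℤ), 0 ∉ F ∧ ∀ (H : AddSubgroup (UnitAddTorus d)) (z : UnitAddTorus d),
      (∀ h ∈ H, z + h ∉ U) → ∃ n ∈ F, ∀ h ∈ H, mFourier n h = 1 := by
  classical
  let ν : Measure (UnitAddTorus d) := Measure.addHaarMeasure ⊤
  have : IsProbabilityMeasure ν := ⟨Measure.addHaarMeasure_self⟩
  obtain ⟨u, hu⟩ := hne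
  obtain ⟨ψ, hψ0, hψ1, hψ⟩ := exists_continuous_zero_one_of_isClosed hU.isClosed_compl
    (isClosed_singleton (x := u)) (by simpa using hu)
  have hψint : Integrable ψ ν :=
    ψ.continuous.integrable_of_hasCompactSupport (HasCompactSupport.of_compactSpace _)
  have hI : 0 < ∫ x, ψ x ∂ν := integral_pos_of_integrable_nonneg_nonzero ψ.continuous hψint
    (fun x => (hψ x).1) (x := u) (by simp [hψ1 rfl])
  set I := ∫ x, ψ x ∂ν
  let ψ' : C(UnitAddTorus d, ℂ) := ⟨fun x => (ψ x : ℂ), by fun_prop⟩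
  obtain ⟨P, hP, hdist⟩ : ∃ P ∈ Submodule.span ℂ (Set.range <| mFourier (d := d)),
      dist ψ' P < I / 3 := by
    refine Metric.mem_closure_iff.mp ?_ (I / 3) (by positivity)
    rw [← Submodule.topologicalClosure_coe, span_mFourier_closure_eq_top]
    trivial
  obtain ⟨c, rfl⟩ := Finsupp.mem_span_range_iff_exists_finsupp.mp hP
  set P : C(UnitAddTorus d, ℂ) := c.sum fun n a => a • mFourier n
  have hnorm (x : UnitAddTorus d) : ‖ψ' x - P x‖ ≤ I / 3 := by
    rw [← dist_eq_norm]
    exact (ContinuousMap.dist_apply_le_dist x).trans hdist.le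
  have hν : ‖(I : ℂ) - c 0‖ ≤ I / 3 := by
    have h1 := integral_sum_mFourier_coset ν (AddMonoidHom.id _) continuous_id c
      (fun n _ hn => exists_mFourier_apply_ne_one hn) 0
    simp only [AddMonoidHom.id_apply, zero_add] at h1
    have h2 : ∫ x, ψ' x ∂ν = (I : ℂ) := integral_ofReal
    have hint (f : C(UnitAddTorus d, ℂ)) : Integrable f ν :=
      f.continuous.integrable_of_hasCompactSupport (HasCompactSupport.of_compactSpace _)
    rw [← h1, ← h2, ← integral_sub (hint ψ') (hint _)]
    simpa using norm_integral_le_of_norm_le_const (μ := ν) (Filter.Eventually.of_forall hnorm)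
  refine ⟨c.support.erase 0, Finset.notMem_erase _ _, fun H z hH => ?_⟩
  by_contra! hcon
  let K := H.topologicalClosure
  have hK : IsClosed (K : Set (UnitAddTorus d)) := H.isClosed_topologicalClosure
  have : CompactSpace K := isCompact_iff_compactSpace.mp hK.isCompact
  have hKU : ∀ k ∈ K, z + k ∉ U := fun k hk =>
    closure_minimal (s := (H : Set (UnitAddTorus d))) (t := (z + ·) ⁻¹' Uᶜ) (fun h hh => hH h hh)
      (hU.isClosed_compl.preimage (by fun_prop)) hk
  let μ : Measure K := Measure.addHaarMeasure ⊤
  have : IsProbabilityMeasure μ := ⟨Measure.addHaarMeasure_self⟩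
  have h1 := integral_sum_mFourier_coset μ K.subtype continuous_subtype_val c
    (fun n hn hn0 => by
      obtain ⟨h, hh, hne⟩ := hcon n (Finset.mem_erase.mpr ⟨hn0, hn⟩)
      exact ⟨⟨h, H.le_topologicalClosure hh⟩, hne⟩) z
  have hμ : ‖c 0‖ ≤ I / 3 := by
    rw [← h1]
    refine (norm_integral_le_of_norm_le_const (C := I / 3)
      (Filter.Eventually.of_forall fun k => ?_)).trans (by simp)
    have h0 : ψ' (z + k) = 0 := by
      change ((ψ (z + k) : ℝ) : ℂ) = 0
      rw [hψ0 (hKU k k.2)]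
      simp
    simpa [h0] using hnorm (z + k)
  have h := norm_sub_norm_le (I : ℂ) (c 0)
  rw [Complex.norm_real, Real.norm_of_nonneg hI.le] at h
  linarith

theorem exists_isCoprime_mul_eq {a b : ℤ} (h : a ≠ 0 ∨ b ≠ 0) :
    ∃ c : ℤ × ℤ × ℕ, (IsCoprime c.1 c.2.1 ∧ 1 ≤ c.2.2) ∧
      (c.2.2 : ℤ) * c.2.1 = a ∧ (c.2.2 : ℤ) * c.1 = -b := by
  have hg : 0 < Int.gcd a b := Int.gcd_pos_iff.mpr h
  refine ⟨(-(b / Int.gcd a b), a / Int.gcd a b, Int.gcd a b), ⟨?_, hg⟩,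
    Int.mul_ediv_cancel' (Int.gcd_dvd_left ..), ?_⟩
  · exact (Int.isCoprime_iff_gcd_eq_one.mpr (Int.gcd_ediv_gcd_ediv_gcd hg)).symm.neg_left
  · rw [mul_neg, Int.mul_ediv_cancel' (Int.gcd_dvd_right ..)]

theorem continuous_torusDist_left (y : AddCircle (1 : ℝ) × AddCircle (1 : ℝ)) :
    Continuous fun x => torusDist x y := by
  unfold torusDist
  fun_prop

/-- for every `ε > 0` there are finitely many proper closed 1-dimensional
subgroups of `ℝ²/ℤ²` — kernels of the characters `(x,y) ↦ k(qx − py)` with `(p,q)` a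
primitive integer vector and `k ≥ 1` — such that every subgroup `H` of `ℝ²/ℤ²` which is
not `ε`-dense (for the Euclidean metric) is contained in one of them. -/
theorem non_dense_subgroups_of_torus_in_finitely_many_circles
    (ε : ℝ) (hε : 0 < ε) :
    ∃ S : Finset (ℤ × ℤ × ℕ),
      (∀ c ∈ S, IsCoprime c.1 c.2.1 ∧ 1 ≤ c.2.2) ∧
      ∀ H : AddSubgroup (AddCircle (1 : ℝ) × AddCircle (1 : ℝ)),
        ¬ (∀ z, ∃ h ∈ (H : Set (AddCircle (1 : ℝ) × AddCircle (1 : ℝ))), torusDist z h ≤ ε) →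
        ∃ c ∈ S, ∀ h ∈ H,
          (c.2.2 : ℤ) • (c.2.1 • h.1 - c.1 • h.2) = (0 : AddCircle (1 : ℝ)) := by
  classical
  let e : (AddCircle (1 : ℝ) × AddCircle (1 : ℝ)) →+ UnitAddTorus (Fin 2) :=
    { toFun := fun x => ![x.1, x.2]
      map_zero' := by ext i; fin_cases i <;> rfl
      map_add' := fun x y => by ext i; fin_cases i <;> rfl }
  obtain ⟨F, hF0, hF⟩ := UnitAddTorus.exists_finset_mFourier_eq_one_of_disjoint
    (U := {x : UnitAddTorus (Fin 2) | torusDist (x 0, x 1) 0 < ε})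
    (isOpen_lt ((continuous_torusDist_left 0).comp (by fun_prop)) continuous_const)
    ⟨0, by simpa [torusDist] using hε⟩
  have hne : ∀ n ∈ F, n 0 ≠ 0 ∨ n 1 ≠ 0 := by
    intro n hn
    by_contra! h
    have : n = 0 := by ext i; fin_cases i <;> simp [h.1, h.2]
    exact hF0 (this ▸ hn)
  choose! c hc hc1 hc2 using fun n hn => exists_isCoprime_mul_eq (hne n hn)
  refine ⟨F.image c, Finset.forall_mem_image.mpr hc, fun H hH => ?_⟩
  push Not at hH
  obtain ⟨z, hz⟩ := hH
  obtain ⟨n, hn, hnH⟩ := hF (H.map e) (e z) (by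
    rintro _ ⟨h, hh, rfl⟩ hlt
    refine (hz (-h) (H.neg_mem hh)).not_gt (lt_of_eq_of_lt ?_ hlt)
    simp [torusDist, e, dist_eq_norm])
  refine ⟨c n, Finset.mem_image_of_mem c hn, fun h hh => ?_⟩
  have key := UnitAddTorus.mFourier_apply_eq_one_iff.mp (hnH (e h) ⟨h, hh, rfl⟩)
  rw [Fin.sum_univ_two] at key
  rw [smul_sub, smul_smul, smul_smul, hc1 n hn, hc2 n hn, neg_smul, sub_neg_eq_add]
  exact key
end

section
/- Let s₂ be an irrational real number, let a, b, c, d be integers with ad − bc ≠ 0, and let s₁ ∈ ℝ be such that 1, s₁, s₂ are linearly independent over ℚ. Then the map (x₂, x₃, x₄) ↦ (x₂ + s₂, x₃ + a s₁ + b x₂, x₄ + c s₁ + d x₂) on ℝ³/ℤ³ is uniquely ergodic: the Haar measure is its unique invariant Borel probability measure. -/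
open MeasureTheory

open scoped ComplexConjugate BoundedContinuousFunction

/-- A finite measure on a finite-dimensional torus is determined by its Fourier coefficients. -/
theorem UnitAddTorus.measure_ext_of_integral_mFourier {d : Type*} [Fintype d]
    {μ ν : Measure (UnitAddTorus d)} [IsFiniteMeasure μ] [IsFiniteMeasure ν]
    (h : ∀ n : d → ℤ, ∫ x, mFourier n x ∂μ = ∫ x, mFourier n x ∂ν) : μ = ν := by
  refine ext_of_forall_mem_subalgebra_integral_eq_of_polish (𝕜 := ℂ)
    (A := (mFourierSubalgebra d).comap (BoundedContinuousFunction.toContinuousMapStarₐ ℂ)) ?_ ?_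
  · intro x y hxy
    obtain ⟨_, ⟨f, hf, rfl⟩, hne⟩ := mFourierSubalgebra_separatesPoints hxy
    exact ⟨f, ⟨f, ⟨BoundedContinuousFunction.mkOfCompact f, hf, rfl⟩, rfl⟩, hne⟩
  · intro g hg
    have key : ∀ f ∈ Submodule.span ℂ (Set.range (mFourier (d := d))),
        ∫ x, f x ∂μ = ∫ x, f x ∂ν := by
      intro f hf
      induction hf using Submodule.span_induction with
      | mem f hf => obtain ⟨n, rfl⟩ := hf; exact h n
      | zero => simp
      | add f g _ _ hf hg =>
        have hint (f : C(UnitAddTorus d, ℂ)) (ρ : Measure (UnitAddTorus d)) [IsFiniteMeasure ρ] :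
            Integrable f ρ := (BoundedContinuousFunction.mkOfCompact f).integrable ρ
        simp only [ContinuousMap.add_apply]
        rw [integral_add (hint f μ) (hint g μ), integral_add (hint f ν) (hint g ν), hf, hg]
      | smul c f _ hf =>
        simp only [ContinuousMap.smul_apply]
        rw [integral_smul, integral_smul, hf]
    rw [← mFourierSubalgebra_coe] at key
    exact key _ hg

/-- An `L²`-orthonormal sequence of continuous functions whose integrals all have the same norm
consists of functions of integral zero. -/
theorem integral_eq_zero_of_orthonormal_of_norm_eq {X : Type*} [TopologicalSpace X]
    [CompactSpace X] [MeasurableSpace X] [BorelSpace X] [SecondCountableTopology X] {μ : Measure X}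
    [IsFiniteMeasure μ] (f : ℕ → C(X, ℂ))
    (horth : Orthonormal ℂ fun i => ContinuousMap.toLp 2 μ ℂ (f i))
    (hnorm : ∀ i, ‖∫ x, f i x ∂μ‖ = ‖∫ x, f 0 x ∂μ‖) :
    ∫ x, f 0 x ∂μ = 0 := by
  set w := ContinuousMap.toLp 2 μ ℂ (1 : C(X, ℂ))
  have hinner (i : ℕ) : ‖inner ℂ (ContinuousMap.toLp 2 μ ℂ (f i)) w‖ = ‖∫ x, f 0 x ∂μ‖ := by
    rw [← hnorm i, ContinuousMap.inner_toLp]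
    simp only [ContinuousMap.one_apply, one_mul]
    rw [integral_conj, RCLike.norm_conj]
  by_contra hne
  have hpos : 0 < ‖∫ x, f 0 x ∂μ‖ ^ 2 := by positivity
  obtain ⟨N, hN⟩ := exists_nat_gt (‖w‖ ^ 2 / ‖∫ x, f 0 x ∂μ‖ ^ 2)
  rw [div_lt_iff₀ hpos] at hN
  have hbessel := horth.sum_inner_products_le w (s := Finset.range N)
  simp only [hinner, Finset.sum_const, Finset.card_range, nsmul_eq_mul] at hbessel
  exact hN.not_ge hbessel

section fourier

variable {T : ℝ}

theorem fourier_apply_add (n : ℤ) (x y : AddCircle T) :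
    fourier n (x + y) = fourier n x * fourier n y := by
  simp only [fourier_apply, smul_add, AddCircle.toCircle_add, Circle.coe_mul]

theorem fourier_apply_zsmul (n b : ℤ) (x : AddCircle T) :
    fourier n (b • x) = fourier (n * b) x := by
  simp only [fourier_apply, smul_smul]

theorem fourier_one_coe_eq_one_iff {r : ℝ} :
    fourier 1 (r : AddCircle (1 : ℝ)) = 1 ↔ ∃ n : ℤ, (n : ℝ) = r := by
  rw [fourier_one, ← Circle.coe_one, Circle.coe_inj, ← AddCircle.toCircle_zero (T := 1),
    (AddCircle.injective_toCircle one_ne_zero).eq_iff, AddCircle.coe_eq_zero_iff]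
  simp

theorem integral_fourier_volume [hT : Fact (0 < T)] {n : ℤ} (hn : n ≠ 0) :
    ∫ x : AddCircle T, fourier n x = 0 :=
  integral_eq_zero_of_add_right_eq_neg (fourier_add_half_inv_index hn hT.out)

end fourier

/-- The characters `e(k x + l y + m z)` of the three-dimensional torus. -/
noncomputable def prodFourier (k l m : ℤ) :
    C(AddCircle (1 : ℝ) × AddCircle (1 : ℝ) × AddCircle (1 : ℝ), ℂ) where
  toFun p := fourier k p.1 * (fourier l p.2.1 * fourier m p.2.2)
  continuous_toFun := by fun_prop

theorem prodFourier_apply (k l m : ℤ)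
    (p : AddCircle (1 : ℝ) × AddCircle (1 : ℝ) × AddCircle (1 : ℝ)) :
    prodFourier k l m p = fourier k p.1 * (fourier l p.2.1 * fourier m p.2.2) := rfl

theorem conj_prodFourier_apply (k l m : ℤ)
    (p : AddCircle (1 : ℝ) × AddCircle (1 : ℝ) × AddCircle (1 : ℝ)) :
    conj (prodFourier k l m p) = prodFourier (-k) (-l) (-m) p := by
  simp only [prodFourier_apply, map_mul, fourier_neg]

theorem prodFourier_mul_apply (k l m k' l' m' : ℤ)
    (p : AddCircle (1 : ℝ) × AddCircle (1 : ℝ) × AddCircle (1 : ℝ)) :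
    prodFourier k l m p * prodFourier k' l' m' p = prodFourier (k + k') (l + l') (m + m') p := by
  simp only [prodFourier_apply, fourier_add]
  ring

theorem integral_prodFourier_volume {k l m : ℤ} (h : ¬ (k = 0 ∧ l = 0 ∧ m = 0)) :
    ∫ p, prodFourier k l m p = 0 := by
  have hprod : ∫ p, prodFourier k l m p = (∫ x : AddCircle (1 : ℝ), fourier k x) *
      ((∫ x : AddCircle (1 : ℝ), fourier l x) * ∫ x : AddCircle (1 : ℝ), fourier m x) := by
    rw [← integral_prod_mul, ← integral_prod_mul]
    rfl
  rw [hprod]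
  by_cases hk : k = 0
  · by_cases hl : l = 0
    · rw [integral_fourier_volume (n := m) (by tauto), mul_zero, mul_zero]
    · rw [integral_fourier_volume hl, zero_mul, mul_zero]
  · rw [integral_fourier_volume hk, zero_mul]

/-- A probability measure on the three-dimensional torus whose nontrivial Fourier coefficients
vanish is the Haar measure. -/
theorem eq_volume_of_integral_prodFourier_eq_zero
    {μ : Measure (AddCircle (1 : ℝ) × AddCircle (1 : ℝ) × AddCircle (1 : ℝ))}
    [IsProbabilityMeasure μ]
    (h : ∀ k l m : ℤ, ¬ (k = 0 ∧ l = 0 ∧ m = 0) → ∫ p, prodFourier k l m p ∂μ = 0) :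
    μ = volume := by
  let g : AddCircle (1 : ℝ) × AddCircle (1 : ℝ) × AddCircle (1 : ℝ) → UnitAddTorus (Fin 3) :=
    fun p => ![p.1, p.2.1, p.2.2]
  let g' : UnitAddTorus (Fin 3) → AddCircle (1 : ℝ) × AddCircle (1 : ℝ) × AddCircle (1 : ℝ) :=
    fun x => (x 0, x 1, x 2)
  have hg : Measurable g := by
    refine measurable_pi_lambda _ fun i => ?_
    fin_cases i
    · exact measurable_fst
    · exact measurable_fst.comp measurable_snd
    · exact measurable_snd.comp measurable_snd
  have hg' : Measurable g' := by fun_prop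
  have hcomp (ρ : Measure (AddCircle (1 : ℝ) × AddCircle (1 : ℝ) × AddCircle (1 : ℝ))) :
      (ρ.map g).map g' = ρ := by
    rw [Measure.map_map hg' hg]
    exact Measure.map_id
  have hint (ρ : Measure (AddCircle (1 : ℝ) × AddCircle (1 : ℝ) × AddCircle (1 : ℝ)))
      (n : Fin 3 → ℤ) : ∫ x, UnitAddTorus.mFourier n x ∂(ρ.map g) =
        ∫ p, prodFourier (n 0) (n 1) (n 2) p ∂ρ := by
    rw [integral_map hg.aemeasurable
      (ContinuousMap.continuous _).measurable.aestronglyMeasurable]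
    refine integral_congr_ae (.of_forall fun p => ?_)
    simp [UnitAddTorus.mFourier, prodFourier_apply, Fin.prod_univ_three, g, mul_assoc]
  have hmap : μ.map g = (volume : Measure (AddCircle (1 : ℝ) × _)).map g := by
    refine UnitAddTorus.measure_ext_of_integral_mFourier fun n => ?_
    rw [hint, hint]
    by_cases hn : n 0 = 0 ∧ n 1 = 0 ∧ n 2 = 0
    · obtain ⟨h0, h1, h2⟩ := hn
      have hvol : (volume : Measure (AddCircle (1 : ℝ) × AddCircle (1 : ℝ) ×
          AddCircle (1 : ℝ))).real Set.univ = 1 := by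
        rw [← Set.univ_prod_univ, ← Set.univ_prod_univ, Measure.real, Measure.volume_eq_prod,
          Measure.prod_prod, Measure.volume_eq_prod, Measure.prod_prod]
        simp
      simp [h0, h1, h2, prodFourier_apply, hvol]
    · rw [h _ _ _ hn, integral_prodFourier_volume hn]
  rw [← hcomp μ, hmap, hcomp]

/-- An affine skew translation multiplies a Fourier coefficient of an invariant measure by a phase
and shifts its first frequency. -/
theorem integral_prodFourier_of_skew_invariant {α β γ : ℝ} {b d : ℤ}
    {μ : Measure (AddCircle (1 : ℝ) × AddCircle (1 : ℝ) × AddCircle (1 : ℝ))}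
    (hinv : MeasurePreserving
      (fun p : AddCircle (1 : ℝ) × AddCircle (1 : ℝ) × AddCircle (1 : ℝ) =>
        (p.1 + (α : AddCircle (1 : ℝ)), p.2.1 + (β : AddCircle (1 : ℝ)) + b • p.1,
          p.2.2 + (γ : AddCircle (1 : ℝ)) + d • p.1)) μ μ) (k l m : ℤ) :
    ∫ p, prodFourier k l m p ∂μ =
      fourier 1 ((k * α + l * β + m * γ : ℝ) : AddCircle (1 : ℝ)) *
        ∫ p, prodFourier (k + l * b + m * d) l m p ∂μ := by
  have hmap := integral_map (μ := μ) hinv.measurable.aemeasurable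
    (ContinuousMap.continuous (prodFourier k l m)).measurable.aestronglyMeasurable
  rw [hinv.map_eq] at hmap
  rw [hmap, ← integral_const_mul]
  refine integral_congr_ae (.of_forall fun p => ?_)
  have hphase : fourier 1 ((k * α + l * β + m * γ : ℝ) : AddCircle (1 : ℝ)) =
      fourier k (α : AddCircle (1 : ℝ)) * fourier l (β : AddCircle (1 : ℝ)) *
        fourier m (γ : AddCircle (1 : ℝ)) := by
    simp only [AddCircle.coe_add, fourier_apply_add, ← zsmul_eq_mul, AddCircle.coe_zsmul,
      fourier_apply_zsmul, one_mul]
  simp only [hphase, prodFourier_apply, fourier_apply_add, fourier_apply_zsmul, fourier_add]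
  ring

/-- under the same hypotheses as Statement 5, the map
`(x₂,x₃,x₄) ↦ (x₂+s₂, x₃+as₁+bx₂, x₄+cs₁+dx₂)` on `ℝ³/ℤ³` is uniquely ergodic:
the Haar measure is its unique invariant Borel probability measure. -/
theorem uniquely_ergodic_skew_translation_T3
    (s₁ s₂ : ℝ) (hs₂ : Irrational s₂)
    (hind : LinearIndependent ℚ ![(1 : ℝ), s₁, s₂])
    (a b c d : ℤ) (hdet : a * d - b * c ≠ 0)
    (μ : Measure (AddCircle (1 : ℝ) × AddCircle (1 : ℝ) × AddCircle (1 : ℝ)))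
    [IsProbabilityMeasure μ]
    (hinv : MeasurePreserving
      (fun p : AddCircle (1 : ℝ) × AddCircle (1 : ℝ) × AddCircle (1 : ℝ) =>
        (p.1 + (s₂ : AddCircle (1 : ℝ)),
         p.2.1 + (((a : ℝ) * s₁ : ℝ) : AddCircle (1 : ℝ)) + b • p.1,
         p.2.2 + (((c : ℝ) * s₁ : ℝ) : AddCircle (1 : ℝ)) + d • p.1))
      μ μ) :
    μ = volume := by
  have hshift := integral_prodFourier_of_skew_invariant hinv
  -- Coefficients with no frequency shift are multiplied by a nontrivial phase.
  have hfixed (k l m : ℤ) (hn : l * b + m * d = 0) (hne : ¬ (k = 0 ∧ l * a + m * c = 0)) :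
      ∫ p, prodFourier k l m p ∂μ = 0 := by
    have hs := hshift k l m
    rw [add_assoc k, hn, add_zero] at hs
    by_contra h0
    obtain ⟨n, hn⟩ := fourier_one_coe_eq_one_iff.1 ((right_eq_mul₀ h0).1 hs)
    have hcoef := Fintype.linearIndependent_iff.1 hind
      ![(-n : ℚ), ((l * a + m * c : ℤ) : ℚ), (k : ℚ)] (by
        simp only [Fin.sum_univ_three, Matrix.cons_val, Rat.smul_def]
        push_cast
        linear_combination -hn)
    exact hne ⟨Int.cast_eq_zero.1 (hcoef 2), Int.cast_eq_zero.1 (hcoef 1)⟩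
  refine eq_volume_of_integral_prodFourier_eq_zero fun k l m hklm => ?_
  by_cases hn : l * b + m * d = 0
  · refine hfixed k l m hn fun ⟨hk, hac⟩ => hklm ⟨hk, ?_, ?_⟩
    · exact (mul_eq_zero.1 (by linear_combination d * hac - c * hn :
        l * (a * d - b * c) = 0)).resolve_right hdet
    · exact (mul_eq_zero.1 (by linear_combination a * hn - b * hac :
        m * (a * d - b * c) = 0)).resolve_right hdet
  · -- The shifted characters are orthonormal, and their integrals have equal norms.
    set n := l * b + m * d
    have hzero := integral_eq_zero_of_orthonormal_of_norm_eq (μ := μ)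
      (fun j : ℕ => prodFourier (k + j * n) l m) ?_ ?_
    · simpa using hzero
    · rw [orthonormal_iff_ite]
      intro i j
      rw [ContinuousMap.inner_toLp]
      simp only [conj_prodFourier_apply, prodFourier_mul_apply, add_neg_cancel]
      split_ifs with hij
      · simp [hij, prodFourier_apply]
      · refine hfixed _ 0 0 (by simp) fun h => hij ?_
        have : ((j : ℤ) - i) * n = 0 := by linear_combination h.1
        have := (mul_eq_zero.1 this).resolve_right hn
        lia
    · intro i
      induction i with
      | zero => rfl
      | succ i ih =>
        have hs := congrArg norm (hshift (k + i * n) l m)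
        rw [norm_mul, fourier_apply, Circle.norm_coe, one_mul, ih] at hs
        rw [hs, show k + i * n + l * b + m * d = k + (i + 1 : ℕ) * n by push_cast; ring]
end

section
/- Let g(x, y) = (x + s, y + x) on the torus (ℂ/Λ)², realized as an affine map on ℂ²/(Λ×Λ). If the orbit of every point under the translation x ↦ x + s is dense in ℂ/Λ (equivalently, s generates a dense subgroup), then g is uniquely ergodic: the unique g-invariant Borel probability measure on ℂ²/(Λ×Λ) is the Haar measure. -/
open MeasureTheory

open scoped BoundedContinuousFunction ComplexConjugate

section Characters

variable {E : Type*} [AddCommGroup E] [TopologicalSpace E]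

/-- A continuous circle-valued additive character, as a bounded continuous complex function. -/
noncomputable def AddChar.toBCF (χ : AddChar E Circle) (hχ : Continuous χ) : E →ᵇ ℂ :=
  .ofNormedAddCommGroup (fun x => (χ x : ℂ)) (by fun_prop) 1
    fun x => (Circle.norm_coe (χ x)).le

@[simp]
lemma AddChar.toBCF_apply (χ : AddChar E Circle) (hχ : Continuous χ) (x : E) :
    χ.toBCF hχ x = χ x := rfl

variable (E) in
/-- The submonoid of bounded continuous functions given by continuous characters. -/
def characterSubmonoid : Submonoid (E →ᵇ ℂ) where
  carrier := {f | ∃ χ : AddChar E Circle, ∃ hχ : Continuous χ, χ.toBCF hχ = f}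
  one_mem' := ⟨1, continuous_const, rfl⟩
  mul_mem' := by
    rintro _ _ ⟨χ, hχ, rfl⟩ ⟨ψ, hψ, rfl⟩
    exact ⟨χ * ψ, hχ.mul hψ, rfl⟩

lemma star_characterSubmonoid_subset :
    star (characterSubmonoid E : Set (E →ᵇ ℂ)) ⊆ characterSubmonoid E := by
  rintro f ⟨χ, hχ, hf⟩
  have hχ' : ⇑χ⁻¹ = fun x => (χ x)⁻¹ := funext χ.inv_apply'
  refine ⟨χ⁻¹, hχ' ▸ hχ.inv, ?_⟩
  rw [← star_star f, ← hf]
  ext x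
  exact (congrArg _ (congrFun hχ' x)).trans (Circle.coe_inv_eq_conj _)

/-- Finite Borel measures on a Polish group whose continuous characters separate points are
determined by the integrals of these characters. -/
lemma MeasureTheory.ext_of_integral_addChar_eq [PolishSpace E] [MeasurableSpace E] [BorelSpace E]
    {μ ν : Measure E} [IsFiniteMeasure μ] [IsFiniteMeasure ν]
    (hsep : ∀ x : E, x ≠ 0 → ∃ χ : AddChar E Circle, Continuous χ ∧ χ x ≠ 1)
    (h : ∀ χ : AddChar E Circle, Continuous χ → ∫ x, (χ x : ℂ) ∂μ = ∫ x, (χ x : ℂ) ∂ν) :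
    μ = ν := by
  refine ext_of_forall_mem_subalgebra_integral_eq_of_polish (𝕜 := ℂ)
    (A := StarAlgebra.adjoin ℂ (characterSubmonoid E : Set (E →ᵇ ℂ))) ?_ ?_
  · intro x y hxy
    obtain ⟨χ, hχ, hne⟩ := hsep (x - y) (sub_ne_zero.2 hxy)
    refine ⟨fun x => (χ x : ℂ), ⟨(χ.toBCF hχ).toContinuousMap,
      ⟨χ.toBCF hχ, StarAlgebra.subset_adjoin ℂ _ ⟨χ, hχ, rfl⟩, rfl⟩, rfl⟩, fun hxy => hne ?_⟩
    rw [AddChar.map_sub_eq_div, Circle.ext hxy, div_self']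
  · intro g hg
    have hspan : g ∈ Submodule.span ℂ (characterSubmonoid E : Set (E →ᵇ ℂ)) := by
      have hg' : g ∈ Subalgebra.toSubmodule
          (StarAlgebra.adjoin ℂ (characterSubmonoid E : Set (E →ᵇ ℂ))).toSubalgebra := hg
      rwa [StarAlgebra.adjoin_eq_span, Set.union_eq_self_of_subset_right
        star_characterSubmonoid_subset, Submonoid.closure_eq] at hg'
    clear hg
    induction hspan using Submodule.span_induction with
    | mem f hf =>
      obtain ⟨χ, hχ, rfl⟩ := hf
      exact h χ hχ
    | zero => simp
    | add f₁ f₂ _ _ h₁ h₂ =>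
      simp only [BoundedContinuousFunction.coe_add, Pi.add_apply]
      rw [integral_add (f₁.integrable μ) (f₂.integrable μ),
        integral_add (f₁.integrable ν) (f₂.integrable ν), h₁, h₂]
    | smul c f _ hf => simp [integral_const_mul, hf]

end Characters

section Lattice

variable {E : Type*} [NormedAddCommGroup E] [NormedSpace ℝ E] [FiniteDimensional ℝ E]

/-- A subgroup with compact quotient spans the ambient space. -/
lemma AddSubgroup.span_eq_top_of_compactSpace_quotient (Λ : AddSubgroup E) [CompactSpace (E ⧸ Λ)] :
    Submodule.span ℝ (Λ : Set E) = ⊤ := by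
  by_contra hne
  obtain ⟨f, hf0, hf⟩ := Submodule.exists_le_ker_of_lt_top _ (lt_top_iff_ne_top.2 hne)
  let F : E ⧸ Λ →+ ℝ := QuotientAddGroup.lift Λ f.toAddMonoidHom
    fun x hx => hf (Submodule.subset_span hx)
  have hF : Continuous F := f.continuous_of_finiteDimensional.quotient_lift _
  have hsurj : Function.Surjective F := fun t => by
    obtain ⟨x, hx⟩ := f.surjective hf0 t
    exact ⟨x, hx⟩
  have hc := isCompact_range hF
  rw [hsurj.range_eq] at hc
  exact noncompact_univ ℝ hc

/-- Characters of the torus attached to a lattice separate points. -/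
lemma AddSubgroup.exists_addChar_quotient_ne_one (Λ : AddSubgroup E) [DiscreteTopology Λ]
    [CompactSpace (E ⧸ Λ)] {x : E ⧸ Λ} (hx : x ≠ 0) :
    ∃ χ : AddChar (E ⧸ Λ) Circle, Continuous χ ∧ χ x ≠ 1 := by
  let L : Submodule ℤ E := AddSubgroup.toIntSubmodule Λ
  have : DiscreteTopology L := inferInstanceAs (DiscreteTopology Λ)
  have : IsZLattice ℝ L := ⟨Λ.span_eq_top_of_compactSpace_quotient⟩
  let b := (Module.Free.chooseBasis ℤ L).ofZLatticeBasis ℝ L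
  have hmem (v : E) : v ∈ Λ ↔ ∀ i, b.repr v i ∈ Set.range (algebraMap ℤ ℝ) := by
    rw [← b.mem_span_iff_repr_mem ℤ, Module.Basis.ofZLatticeBasis_span]
    rfl
  obtain ⟨v, rfl⟩ := QuotientAddGroup.mk_surjective x
  have hv : v ∉ Λ := fun h => hx ((QuotientAddGroup.eq_zero_iff v).2 h)
  simp only [hmem, not_forall] at hv
  obtain ⟨i, hi⟩ := hv
  let F : E ⧸ Λ →+ UnitAddCircle := QuotientAddGroup.lift Λ
    ((QuotientAddGroup.mk' (AddSubgroup.zmultiples (1 : ℝ))).comp (b.coord i).toAddMonoidHom)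
    fun w hw => by
      obtain ⟨n, hn⟩ := (hmem w).1 hw i
      exact (AddCircle.coe_eq_zero_iff 1).2 ⟨n, by simpa using hn⟩
  have hF : Continuous F :=
    (continuous_quotient_mk'.comp (b.coord i).continuous_of_finiteDimensional).quotient_lift _
  refine ⟨AddCircle.toCircle_addChar.compAddMonoidHom F,
    AddCircle.continuous_toCircle.comp hF, fun h => hi ?_⟩
  have hz : F v = 0 := AddCircle.injective_toCircle one_ne_zero
    (h.trans AddCircle.toCircle_zero.symm)
  obtain ⟨n, hn⟩ := (AddCircle.coe_eq_zero_iff 1).1 hz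
  exact ⟨n, by simpa using hn⟩

end Lattice

section Bessel

/-- If the functions `f n` are unimodular, pairwise orthogonal, and all have the same integral
against a probability measure, then this integral vanishes. -/
lemma integral_eq_zero_of_orthogonal {X : Type*} [TopologicalSpace X] [CompactSpace X]
    [MeasurableSpace X] [BorelSpace X]
    [SecondCountableTopologyEither X ℂ] {μ : Measure X} [IsProbabilityMeasure μ] {f : ℕ → C(X, ℂ)}
    {c : ℂ} (hnorm : ∀ n x, ‖f n x‖ = 1)
    (horth : ∀ m n, m < n → ∫ x, f n x * conj (f m x) ∂μ = 0)
    (hint : ∀ n, ∫ x, f n x ∂μ = c) : c = 0 := by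
  let v (n : ℕ) : Lp ℂ 2 μ := ContinuousMap.toLp 2 μ ℂ (f n)
  have hv : Orthonormal ℂ v := by
    constructor
    · intro n
      have h1 : inner ℂ (v n) (v n) = 1 := by
        rw [ContinuousMap.inner_toLp]
        simp [Complex.mul_conj, Complex.normSq_eq_norm_sq, hnorm]
      rw [inner_self_eq_norm_sq_to_K] at h1
      exact (pow_eq_one_iff_of_nonneg (norm_nonneg _) two_ne_zero).1 (Complex.ofReal_injective
        (by simpa using h1))
    · intro m n hmn
      rcases lt_or_gt_of_ne hmn with h | h
      · simpa [v, ContinuousMap.inner_toLp] using horth m n h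
      · rw [← inner_conj_symm]
        simpa [v, ContinuousMap.inner_toLp] using horth n m h
  have hs := hv.inner_products_summable (ContinuousMap.toLp 2 μ ℂ 1)
  have hin (n : ℕ) : ‖inner ℂ (v n) (ContinuousMap.toLp 2 μ ℂ 1)‖ ^ 2 = ‖c‖ ^ 2 := by
    rw [← inner_conj_symm, RCLike.norm_conj]
    simp [v, ContinuousMap.inner_toLp, hint]
  simp only [hin] at hs
  simpa using (summable_const_iff _).1 hs

end Bessel

section SkewProduct

variable {G : Type*} [AddCommGroup G]

/-- The skew translation `(x, y) ↦ (x + s, y + x)`. -/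
def skewTranslation (s : G) (p : G × G) : G × G := (p.1 + s, p.2 + p.1)

lemma skewTranslation_iterate (s : G) (n : ℕ) :
    ∃ t : G, ∀ p, (skewTranslation s)^[n] p = p + (0, n • p.1) + (n • s, t) := by
  induction n with
  | zero => exact ⟨0, fun p => by ext <;> simp⟩
  | succ n ih =>
    obtain ⟨t, ht⟩ := ih
    refine ⟨t + n • s, fun p => ?_⟩
    rw [Function.iterate_succ_apply', ht]
    ext <;> simp [skewTranslation, succ_nsmul] <;> abel

variable [TopologicalSpace G]

lemma continuous_skewTranslation [ContinuousAdd G] (s : G) : Continuous (skewTranslation s) := by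
  unfold skewTranslation
  fun_prop

/-- A nontrivial continuous character is nontrivial at a topological generator. -/
lemma AddChar.apply_ne_one_of_dense {s : G}
    (hdense : Dense ((AddSubgroup.zmultiples s : AddSubgroup G) : Set G))
    {χ : AddChar G Circle} (hχ : Continuous χ) (hne : χ ≠ 1) : χ s ≠ 1 := by
  refine fun hs => hne (DFunLike.coe_injective (hχ.ext_on hdense continuous_const ?_))
  rintro _ ⟨n, rfl⟩
  simp [AddChar.map_zsmul_eq_zpow, hs]

variable [MeasurableSpace G] [BorelSpace G]

/-- Characters of the base have zero integral for a skew-invariant measure. -/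
lemma integral_addChar_fst_eq_zero [SecondCountableTopology G] {s : G}
    (hdense : Dense ((AddSubgroup.zmultiples s : AddSubgroup G) : Set G))
    {μ : Measure (G × G)} (hμ : MeasurePreserving (skewTranslation s) μ μ)
    {χ : AddChar G Circle} (hχ : Continuous χ) (hne : χ ≠ 1) :
    ∫ p, (χ p.1 : ℂ) ∂μ = 0 := by
  have hinv : ∫ p, (χ (skewTranslation s p).1 : ℂ) ∂μ = ∫ p, (χ p.1 : ℂ) ∂μ := by
    conv_rhs => rw [← hμ.map_eq]
    rw [integral_map hμ.aemeasurable (Continuous.aestronglyMeasurable (by fun_prop))]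
  simp only [skewTranslation, AddChar.map_add_eq_mul, Circle.coe_mul, integral_mul_const] at hinv
  by_contra h0
  exact AddChar.apply_ne_one_of_dense hdense hχ hne
    (Circle.ext (by simpa using mul_left_cancel₀ h0 (hinv.trans (mul_one _).symm)))

variable [IsTopologicalAddGroup G]

/-- Over a minimal rotation of a divisible compact group, nontrivial characters have zero integral
for every probability measure invariant under the skew translation. -/
lemma integral_addChar_eq_zero [CompactSpace G] [SecondCountableTopology G] {s : G}
    (hdense : Dense ((AddSubgroup.zmultiples s : AddSubgroup G) : Set G))
    (hdiv : ∀ n : ℕ, n ≠ 0 → Function.Surjective fun x : G => n • x)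
    {μ : Measure (G × G)} [IsProbabilityMeasure μ]
    (hμ : MeasurePreserving (skewTranslation s) μ μ)
    {χ : AddChar (G × G) Circle} (hχ : Continuous χ) (hne : χ ≠ 1) :
    ∫ p, (χ p : ℂ) ∂μ = 0 := by
  let ψ : AddChar G Circle := χ.compAddMonoidHom (AddMonoidHom.inr G G)
  have hψ_apply (x : G) : ψ x = χ (0, x) := rfl
  have hψ : Continuous ψ := hχ.comp (by fun_prop : Continuous fun x : G => ((0 : G), x))
  by_cases hψ1 : ψ = 1
  · let φ : AddChar G Circle := χ.compAddMonoidHom (AddMonoidHom.inl G G)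
    have hφ : Continuous φ := hχ.comp (by fun_prop : Continuous fun x : G => (x, (0 : G)))
    have heq (p : G × G) : χ p = φ p.1 := by
      have h2 : χ (0, p.2) = 1 := by rw [← hψ_apply, hψ1, AddChar.one_apply]
      calc χ p = χ ((p.1, 0) + (0, p.2)) := by simp
        _ = φ p.1 := by rw [AddChar.map_add_eq_mul, h2, mul_one]; rfl
    simp only [heq]
    refine integral_addChar_fst_eq_zero hdense hμ hφ fun h => hne ?_
    ext p
    simp [heq, h]
  · have hψn (n : ℕ) (hn : n ≠ 0) : ψ ^ n ≠ 1 := fun h => hψ1 <| by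
      refine DFunLike.ext _ _ fun x => ?_
      obtain ⟨y, rfl⟩ := hdiv n hn x
      simpa [AddChar.map_nsmul_eq_pow] using DFunLike.congr_fun h y
    let T := skewTranslation s
    have hT (n : ℕ) : Continuous T^[n] := (continuous_skewTranslation s).iterate n
    refine integral_eq_zero_of_orthogonal (μ := μ)
      (f := fun n => ⟨fun p => (χ (T^[n] p) : ℂ), by fun_prop⟩) (fun _ _ => Circle.norm_coe _) ?_ fun n => ?_
    · intro m n hmn
      obtain ⟨t, ht⟩ := skewTranslation_iterate s m
      obtain ⟨u, hu⟩ := skewTranslation_iterate s n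
      have key (p : G × G) : (χ (T^[n] p) : ℂ) * conj (χ (T^[m] p) : ℂ) =
          ((ψ ^ (n - m)) p.1 : ℂ) * (χ ((n • s, u) - (m • s, t)) : ℂ) := by
        rw [← Circle.coe_inv_eq_conj, ← Circle.coe_mul, ← Circle.coe_mul, ← AddChar.map_neg_eq_inv,
          ← AddChar.map_add_eq_mul, AddChar.pow_apply, ← AddChar.map_nsmul_eq_pow, hψ_apply,
          ← AddChar.map_add_eq_mul, ht, hu]
        obtain ⟨k, rfl⟩ := Nat.exists_eq_add_of_lt hmn
        congr 2
        ext <;> simp [add_nsmul, add_assoc] <;> abel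
      simp only [ContinuousMap.coe_mk, key, integral_mul_const]
      rw [integral_addChar_fst_eq_zero hdense hμ (hψ.pow _) (hψn _ (by omega)), zero_mul]
    · have hn := hμ.iterate n
      conv_rhs => rw [← hn.map_eq]
      rw [integral_map hn.aemeasurable (Continuous.aestronglyMeasurable (by fun_prop))]
      rfl

/-- The Haar probability measure is invariant under the skew translation. -/
lemma measurePreserving_skewTranslation [CompactSpace G] [SecondCountableTopology G] (s : G)
    (ν : Measure (G × G)) [IsProbabilityMeasure ν] [ν.IsAddLeftInvariant] :
    MeasurePreserving (skewTranslation s) ν ν := by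
  have : ν.IsAddHaarMeasure := {
    toIsOpenPosMeasure := isOpenPosMeasure_of_addLeftInvariant_of_compact Set.univ isCompact_univ
      (by simp) }
  let A : G × G →+ G × G := (AddMonoidHom.fst G G).prod (AddMonoidHom.snd G G + .fst G G)
  have hA : MeasurePreserving A ν ν := A.measurePreserving
    (by change Continuous fun p : G × G => (p.1, p.2 + p.1); fun_prop)
    (fun q => ⟨(q.1, q.2 - q.1), by ext <;> simp [A]⟩) rfl
  convert (measurePreserving_add_left ν (s, 0)).comp hA using 1
  ext p <;> simp [A, skewTranslation, add_comm]

end SkewProduct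

/-- let `Λ` be a lattice in `ℂ` (discrete, with compact quotient) and let
`g(x,y) = (x+s, y+x)` on the torus `(ℂ/Λ)²`.  If `s` generates a dense subgroup of
`ℂ/Λ` (equivalently, every orbit of the translation `x ↦ x+s` is dense), then `g` is
uniquely ergodic: the unique `g`-invariant Borel probability measure is the Haar
measure, i.e. the translation-invariant probability measure `ν`. -/
theorem uniquely_ergodic_skew_product_on_complex_torus
    (Λ : AddSubgroup ℂ) [DiscreteTopology Λ] [CompactSpace (ℂ ⧸ Λ)]
    [MeasurableSpace (ℂ ⧸ Λ)] [BorelSpace (ℂ ⧸ Λ)]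
    (s : ℂ ⧸ Λ)
    (hdense : Dense ((AddSubgroup.zmultiples s : AddSubgroup (ℂ ⧸ Λ)) : Set (ℂ ⧸ Λ)))
    (ν : Measure ((ℂ ⧸ Λ) × (ℂ ⧸ Λ))) [IsProbabilityMeasure ν]
    (hHaar : ∀ a : (ℂ ⧸ Λ) × (ℂ ⧸ Λ), MeasurePreserving (fun z => a + z) ν ν) :
    MeasurePreserving (fun p : (ℂ ⧸ Λ) × (ℂ ⧸ Λ) => (p.1 + s, p.2 + p.1)) ν ν ∧
    ∀ μ : Measure ((ℂ ⧸ Λ) × (ℂ ⧸ Λ)), IsProbabilityMeasure μ →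
      MeasurePreserving (fun p : (ℂ ⧸ Λ) × (ℂ ⧸ Λ) => (p.1 + s, p.2 + p.1)) μ μ →
      μ = ν := by
  have hdiv (n : ℕ) (hn : n ≠ 0) : Function.Surjective fun x : ℂ ⧸ Λ => n • x := by
    intro x
    obtain ⟨z, rfl⟩ := QuotientAddGroup.mk_surjective x
    refine ⟨QuotientAddGroup.mk (z / n), ?_⟩
    change ((n • (z / n) : ℂ) : ℂ ⧸ Λ) = z
    rw [nsmul_eq_mul, mul_div_cancel₀ z (Nat.cast_ne_zero.2 hn)]
  have hsep (p : (ℂ ⧸ Λ) × (ℂ ⧸ Λ)) (hp : p ≠ 0) :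
      ∃ χ : AddChar ((ℂ ⧸ Λ) × (ℂ ⧸ Λ)) Circle, Continuous χ ∧ χ p ≠ 1 := by
    by_cases h1 : p.1 = 0
    · have h2 : p.2 ≠ 0 := fun h2 => hp (Prod.ext h1 h2)
      obtain ⟨χ, hχ, hne⟩ := Λ.exists_addChar_quotient_ne_one h2
      exact ⟨χ.compAddMonoidHom (AddMonoidHom.snd _ _), hχ.comp continuous_snd, hne⟩
    · obtain ⟨χ, hχ, hne⟩ := Λ.exists_addChar_quotient_ne_one h1
      exact ⟨χ.compAddMonoidHom (AddMonoidHom.fst _ _), hχ.comp continuous_fst, hne⟩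
  have : IsClosed (Λ : Set ℂ) := AddSubgroup.isClosed_of_discrete
  have : ν.IsAddLeftInvariant := ⟨fun a => (hHaar a).map_eq⟩
  have hν : MeasurePreserving (skewTranslation s) ν ν := measurePreserving_skewTranslation s ν
  refine ⟨hν, fun μ _ hμ => ext_of_integral_addChar_eq hsep fun χ hχ => ?_⟩
  by_cases h : χ = 1
  · simp [h]
  · rw [integral_addChar_eq_zero hdense hdiv hμ hχ h, integral_addChar_eq_zero hdense hdiv hν hχ h]
end
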